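/- arXiv:2411.12806 — 12 statements merged into one kernel-verified Lean document; each statement's English description precedes it below -/
import Mathlib

section
/- Let μ be a finite measure on the real line. Then the following are equivalent: (1) μ has compact support, i.e. there exists R > 0 such that μ(ℝ ∖ [−R, R]) = 0; (2) for every n ≥ 1 the function x ↦ x^n is μ-integrable and there exists a constant c > 0 such that |∫ x^n dμ(x)| ≤ c^n for all n ≥ 1. -/
open MeasureTheory

/-- Lemma 13.13 of Nica–Speicher: a finite measure on ℝ has compact support iff all its
moments exist and grow at most exponentially. -/
theorem compact_support_iff_moments_exponential
    (μ : Measure ℝ) [IsFiniteMeasure μ] :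
    (∃ R > 0, μ (Set.Icc (-R) R)ᶜ = 0) ↔
      ((∀ n : ℕ, 1 ≤ n → Integrable (fun x : ℝ => x ^ n) μ) ∧
        ∃ c > 0, ∀ n : ℕ, 1 ≤ n → |∫ x, x ^ n ∂μ| ≤ c ^ n) := by
  constructor
  · rintro ⟨R, hR, h⟩
    have hb : ∀ n : ℕ, ∀ᵐ x ∂μ, ‖x ^ n‖ ≤ R ^ n := by
      intro n
      have h' : ∀ᵐ x ∂μ, x ∈ Set.Icc (-R) R := h
      filter_upwards [h'] with x hx
      rw [norm_pow, Real.norm_eq_abs]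
      exact pow_le_pow_left₀ (abs_nonneg x) (abs_le.2 hx) n
    refine ⟨fun n _ => Integrable.of_bound (by fun_prop) (R ^ n) (hb n), ?_⟩
    have hM : 0 ≤ μ.real Set.univ := measureReal_nonneg
    refine ⟨R * (μ.real Set.univ + 1), by positivity, fun n hn => ?_⟩
    have h1 := norm_integral_le_of_norm_le_const (hb n)
    rw [Real.norm_eq_abs] at h1
    refine h1.trans ?_
    rw [mul_pow]
    have h2 : μ.real Set.univ + 1 ≤ (μ.real Set.univ + 1) ^ n :=
      le_self_pow₀ (by linarith) (by omega)
    exact mul_le_mul_of_nonneg_left (by linarith) (by positivity)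
  · rintro ⟨hi, c, hc, h⟩
    refine ⟨2 * c, by positivity, ?_⟩
    set m := μ.real (Set.Icc (-(2 * c)) (2 * c))ᶜ with hm
    have hm0 : 0 ≤ m := measureReal_nonneg
    have key : ∀ n : ℕ, 1 ≤ n → (4 : ℝ) ^ n * m ≤ 1 := by
      intro n hn
      have h1 := mul_meas_ge_le_integral_of_nonneg (μ := μ) (f := fun x : ℝ => x ^ (2 * n))
        (Filter.Eventually.of_forall fun x => (even_two_mul n).pow_nonneg x)
        (hi (2 * n) (by omega)) ((2 * c) ^ (2 * n))
      have h2 := (le_abs_self _).trans (h (2 * n) (by omega))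
      have h3 : m ≤ μ.real {x : ℝ | (2 * c) ^ (2 * n) ≤ x ^ (2 * n)} := by
        refine measureReal_mono ?_
        intro x hx
        have hx' : 2 * c ≤ |x| := by
          by_contra hlt
          exact hx (abs_le.1 (not_le.1 hlt).le)
        show (2 * c) ^ (2 * n) ≤ x ^ (2 * n)
        rw [← (even_two_mul n).pow_abs x]
        exact pow_le_pow_left₀ (by positivity) hx' _
      have h4 : (2 * c) ^ (2 * n) * m ≤ c ^ (2 * n) :=
        (mul_le_mul_of_nonneg_left h3 (by positivity)).trans (h1.trans h2)
      have h5 : (2 * c) ^ (2 * n) = c ^ (2 * n) * 4 ^ n := by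
        rw [mul_pow, pow_mul 2 2 n]; norm_num [mul_comm]
      rw [h5, mul_assoc] at h4
      have hp : 0 < c ^ (2 * n) := by positivity
      exact le_of_mul_le_mul_left (by linarith) hp
    have hz : m = 0 := by
      by_contra hne
      have hpos : 0 < m := lt_of_le_of_ne hm0 (Ne.symm hne)
      obtain ⟨n, hn⟩ := pow_unbounded_of_one_lt (1 / m) (by norm_num : (1 : ℝ) < 4)
      have h1 := key (n + 1) (by omega)
      rw [div_lt_iff₀ hpos] at hn
      rw [pow_succ] at h1
      nlinarith
    exact (measureReal_eq_zero_iff).1 hz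
end

section
/- Fix λ > 0 and s ∈ ℕ. Let (p_N) be a sequence of natural numbers with p_N → ∞, p_N ≤ N/2, and 4·p_N²/N → λ as N → ∞. Then the hypergeometric overlap probability P_N(s) = C(2p_N, s)·C(N − 2p_N, p_N − s) / C(N, p_N) converges, as N → ∞, to the Poisson probability (λ/2)^s · e^{−λ/2} / s!. -/
open Filter

lemma aux_desc (m n : ℕ) (c : ℝ) (hc : 0 ≤ c) (k : ℕ)
    (h : ∀ i < k, ((m - i : ℕ) : ℝ) ≤ c * ((n - i : ℕ) : ℝ)) :
    (m.descFactorial k : ℝ) ≤ c ^ k * (n.descFactorial k : ℝ) := by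
  induction k with
  | zero => simp
  | succ k ih =>
    have h1 := ih (fun i hi => h i (by omega))
    have h2 := h k (by omega)
    rw [Nat.descFactorial_succ, Nat.descFactorial_succ]
    push_cast
    calc ((m - k : ℕ) : ℝ) * (m.descFactorial k : ℝ)
        ≤ (c * ((n - k : ℕ) : ℝ)) * (c ^ k * (n.descFactorial k : ℝ)) := by gcongr
      _ = _ := by ring

lemma aux_upper (N p : ℕ) (hp : 3 * p < N) :
    ((N - 2 * p).choose p : ℝ) / (N.choose p : ℝ) ≤ Real.exp (-(2 * (p : ℝ) ^ 2 / N)) := by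
  have hpos : (0 : ℝ) < (N.choose p : ℝ) := by exact_mod_cast Nat.choose_pos (by omega)
  have key := aux_desc (N - 2 * p) N (Real.exp (-(2 * (p : ℝ) / N))) (Real.exp_nonneg _) p (by
    intro i hi
    have hN : (0 : ℝ) < N := by exact_mod_cast (by omega : 0 < N)
    rw [Nat.cast_sub (by omega), Nat.cast_sub (by omega), Nat.cast_sub (by omega)]
    push_cast
    have h0 : (0 : ℝ) ≤ (N : ℝ) - i := by
      have : (i : ℝ) ≤ N := by exact_mod_cast (by omega : i ≤ N)
      linarith
    have h1 := Real.add_one_le_exp (-(2 * (p : ℝ) / N))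
    refine le_trans ?_ (mul_le_mul_of_nonneg_right h1 h0)
    have : (-(2 * (p : ℝ) / N) + 1) * (N - i) - (N - 2 * p - i) = 2 * p * i / N := by
      field_simp
      ring
    have h3 : (0 : ℝ) ≤ 2 * p * i / N := by positivity
    linarith)
  rw [← Real.exp_nat_mul, Nat.descFactorial_eq_factorial_mul_choose,
    Nat.descFactorial_eq_factorial_mul_choose] at key
  push_cast at key
  have hf : (0 : ℝ) < (p.factorial : ℝ) := by exact_mod_cast p.factorial_pos
  rw [div_le_iff₀ hpos]
  have e : (p : ℝ) * -(2 * (p : ℝ) / N) = -(2 * (p : ℝ) ^ 2 / N) := by ring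
  rw [e] at key
  refine le_of_mul_le_mul_left ?_ hf
  linarith

lemma aux_lower (N p : ℕ) (hp : 3 * p < N) :
    Real.exp (-(2 * (p : ℝ) ^ 2 / (N - 3 * p))) ≤
    ((N - 2 * p).choose p : ℝ) / (N.choose p : ℝ) := by
  have hpos : (0 : ℝ) < (N.choose p : ℝ) := by exact_mod_cast Nat.choose_pos (by omega)
  have hN : (0 : ℝ) < (N : ℝ) - 3 * p := by
    have : (3 * p : ℝ) < N := by exact_mod_cast hp
    linarith
  have key := aux_desc N (N - 2 * p) (Real.exp (2 * (p : ℝ) / (N - 3 * p))) (Real.exp_nonneg _) p (by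
    intro i hi
    rw [Nat.cast_sub (by omega), Nat.cast_sub (by omega), Nat.cast_sub (by omega)]
    push_cast
    have hi' : (i : ℝ) ≤ p := by exact_mod_cast hi.le
    have h0 : (0 : ℝ) ≤ (N : ℝ) - 2 * p - i := by linarith
    have h1 := Real.add_one_le_exp (2 * (p : ℝ) / (N - 3 * p))
    refine le_trans ?_ (mul_le_mul_of_nonneg_right h1 h0)
    have : (2 * (p : ℝ) / (N - 3 * p) + 1) * (N - 2 * p - i) - (N - i)
        = 2 * p * (p - i) / (N - 3 * p) := by
      have c := div_mul_cancel₀ (2 * (p : ℝ)) hN.ne'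
      rw [eq_div_iff hN.ne']
      linear_combination ((N : ℝ) - 2 * p - i) * c
    have h3 : (0 : ℝ) ≤ 2 * p * (p - i) / (N - 3 * p) := by
      have : (0 : ℝ) ≤ p - i := by linarith
      positivity
    linarith)
  rw [← Real.exp_nat_mul, Nat.descFactorial_eq_factorial_mul_choose,
    Nat.descFactorial_eq_factorial_mul_choose] at key
  push_cast at key
  have hf : (0 : ℝ) < (p.factorial : ℝ) := by exact_mod_cast p.factorial_pos
  have e : (p : ℝ) * (2 * (p : ℝ) / (N - 3 * p)) = (2 * (p : ℝ) ^ 2 / (N - 3 * p)) := by ring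
  rw [e] at key
  rw [le_div_iff₀ hpos, Real.exp_neg, inv_mul_le_iff₀ (Real.exp_pos _)]
  refine le_of_mul_le_mul_left ?_ hf
  linarith

lemma aux_step (N p s : ℕ) (hp : 3 * p < N) (hs : s < p) :
    ((2 * p).choose (s + 1) : ℝ) * ((N - 2 * p).choose (p - (s + 1)) : ℝ) / (N.choose p : ℝ)
    = ((2 * p).choose s : ℝ) * ((N - 2 * p).choose (p - s) : ℝ) / (N.choose p : ℝ) *
      (((p : ℝ) ^ 2 / N) * (2 - s / p) * (1 - s / p) /
        ((s + 1) * (1 - 3 * (p / N) + (s + 1) / N))) := by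
  obtain ⟨t, rfl⟩ : ∃ t, p = s + 1 + t := ⟨p - (s + 1), by omega⟩
  obtain ⟨r, rfl⟩ : ∃ r, N = 3 * (s + 1 + t) + r := ⟨N - 3 * (s + 1 + t), by omega⟩
  have h1 := Nat.choose_succ_right_eq (2 * (s + 1 + t)) s
  have h2 := Nat.choose_succ_right_eq (s + 1 + t + r) t
  rw [show 2 * (s + 1 + t) - s = s + 2 + 2 * t by omega] at h1
  rw [show s + 1 + t + r - t = s + 1 + r by omega] at h2
  rw [show 3 * (s + 1 + t) + r - 2 * (s + 1 + t) = s + 1 + t + r by omega,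
    show s + 1 + t - (s + 1) = t by omega, show s + 1 + t - s = t + 1 by omega]
  have h1' : ((2 * (s + 1 + t)).choose (s + 1) : ℝ) * (s + 1)
    = ((2 * (s + 1 + t)).choose s : ℝ) * (s + 2 + 2 * t) := by exact_mod_cast h1
  have h2' : ((s + 1 + t + r).choose (t + 1) : ℝ) * (t + 1)
    = ((s + 1 + t + r).choose t : ℝ) * (s + 1 + r) := by exact_mod_cast h2
  generalize ((2 * (s + 1 + t)).choose (s + 1) : ℝ) = A1 at *
  generalize ((2 * (s + 1 + t)).choose s : ℝ) = A0 at *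
  generalize ((s + 1 + t + r).choose (t + 1) : ℝ) = B1 at *
  generalize ((s + 1 + t + r).choose t : ℝ) = B0 at *
  generalize ((3 * (s + 1 + t) + r).choose (s + 1 + t) : ℝ) = D at *
  push_cast
  have hR : (((s : ℝ) + 1 + t) ^ 2 / (3 * (s + 1 + t) + r)) * (2 - s / (s + 1 + t))
      * (1 - s / (s + 1 + t)) /
        ((s + 1) * (1 - 3 * ((s + 1 + t) / (3 * (s + 1 + t) + r)) + (s + 1) / (3 * (s + 1 + t) + r)))
      = (s + 2 + 2 * t) * (t + 1) / ((s + 1) * (s + 1 + r)) := by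
    have a1 : (s : ℝ) + 1 + t ≠ 0 := by positivity
    have a2 : 3 * ((s : ℝ) + 1 + t) + r ≠ 0 := by positivity
    have a3 : (1 - 3 * (((s:ℝ) + 1 + t) / (3 * (s + 1 + t) + r)) + (s + 1) / (3 * (s + 1 + t) + r))
      = (s + 1 + r) / (3 * (s + 1 + t) + r) := by field_simp; ring
    have a4 : (2 - (s:ℝ) / (s + 1 + t)) = (s + 2 + 2 * t) / (s + 1 + t) := by field_simp; ring
    have a5 : (1 - (s:ℝ) / (s + 1 + t)) = (t + 1) / (s + 1 + t) := by field_simp; ring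
    rw [a3, a4, a5]
    field_simp
  rw [hR]
  have hA : A1 = A0 * (s + 2 + 2 * t) / (s + 1) := by
    rw [eq_div_iff (by positivity)]; exact h1'
  have hB : B0 = B1 * (t + 1) / (s + 1 + r) := by
    rw [eq_div_iff (by positivity)]; exact h2'.symm
  rw [hA, hB]
  simp only [div_eq_mul_inv, mul_inv]
  ring

/-- In the double-scaled limit N → ∞ with 4p²/N → λ, the hypergeometric overlap
probability P_N(s) = C(2p, s)·C(N − 2p, p − s)/C(N, p) converges to the Poisson
probability (λ/2)^s e^{−λ/2}/s!. -/
theorem hypergeometric_tendsto_poisson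
    (lam : ℝ) (hlam : 0 < lam) (s : ℕ) (p : ℕ → ℕ)
    (hp : Tendsto p atTop atTop)
    (hple : ∀ N, 2 * p N ≤ N)
    (hlim : Tendsto (fun N : ℕ => 4 * (p N : ℝ) ^ 2 / (N : ℝ)) atTop (nhds lam)) :
    Tendsto
      (fun N : ℕ =>
        ((Nat.choose (2 * p N) s : ℝ) * (Nat.choose (N - 2 * p N) (p N - s) : ℝ)) /
          (Nat.choose N (p N) : ℝ))
      atTop
      (nhds ((lam / 2) ^ s * Real.exp (-lam / 2) / (Nat.factorial s : ℝ))) := by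
  have hpR : Tendsto (fun N => (p N : ℝ)) atTop atTop := tendsto_natCast_atTop_atTop.comp hp
  have hsq : Tendsto (fun N : ℕ => (p N : ℝ) ^ 2 / (N : ℝ)) atTop (nhds (lam / 4)) := by
    refine (hlim.div_const 4).congr (fun N => ?_)
    ring
  have hpN : Tendsto (fun N : ℕ => (p N : ℝ) / (N : ℝ)) atTop (nhds 0) := by
    have := hsq.mul (tendsto_inv_atTop_zero.comp hpR)
    rw [mul_zero] at this
    refine this.congr' ?_
    filter_upwards [hp.eventually_gt_atTop 0] with N hN
    have : (p N : ℝ) ≠ 0 := by positivity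
    simp only [Function.comp]
    field_simp
  have h3 : ∀ᶠ N in atTop, 3 * p N < N := by
    filter_upwards [hpN.eventually_lt_const (show (0 : ℝ) < 1 / 3 by norm_num),
      eventually_gt_atTop 0] with N h hN
    have hN' : (0 : ℝ) < N := by exact_mod_cast hN
    rw [div_lt_iff₀ hN'] at h
    have : (3 * p N : ℝ) < N := by linarith
    exact_mod_cast this
  induction s with
  | zero =>
    have hlow : Tendsto (fun N : ℕ => Real.exp (-(2 * (p N : ℝ) ^ 2 / (N - 3 * p N)))) atTop
        (nhds (Real.exp (-lam / 2))) := by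
      refine (Real.continuous_exp.tendsto _).comp ?_
      have := ((hsq.const_mul 2).div ((hpN.const_mul 3).const_sub 1) (by norm_num)).neg
      rw [show -(2 * (lam / 4) / (1 - 3 * 0)) = -lam / 2 by ring] at this
      refine this.congr' ?_
      filter_upwards [h3] with N h
      have hN : (N : ℝ) ≠ 0 := by exact_mod_cast (by omega : N ≠ 0)
      have hN2 : (N : ℝ) - 3 * p N ≠ 0 := by
        have : (3 * p N : ℝ) < N := by exact_mod_cast h
        linarith
      have e : 1 - 3 * ((p N : ℝ) / N) = (N - 3 * p N) / N := by field_simp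
      simp only [Pi.div_apply]
      rw [e]
      field_simp
    have hup : Tendsto (fun N : ℕ => Real.exp (-(2 * (p N : ℝ) ^ 2 / N))) atTop
        (nhds (Real.exp (-lam / 2))) := by
      refine (Real.continuous_exp.tendsto _).comp ?_
      have := (hsq.const_mul 2).neg
      rw [show -(2 * (lam / 4)) = -lam / 2 by ring] at this
      refine this.congr (fun N => ?_)
      ring
    simp only [Nat.choose_zero_right, Nat.cast_one, one_mul, Nat.sub_zero, pow_zero,
      Nat.factorial_zero, div_one]
    refine tendsto_of_tendsto_of_tendsto_of_le_of_le' hlow hup ?_ ?_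
    · filter_upwards [h3] with N h using aux_lower N (p N) h
    · filter_upwards [h3] with N h using aux_upper N (p N) h
  | succ s ih =>
    have hsp : Tendsto (fun N : ℕ => (s : ℝ) / (p N : ℝ)) atTop (nhds 0) := hpR.const_div_atTop _
    have hsN : Tendsto (fun N : ℕ => ((s : ℝ) + 1) / (N : ℝ)) atTop (nhds 0) :=
      tendsto_natCast_atTop_atTop.const_div_atTop _
    have hr := ((hsq.mul (hsp.const_sub 2)).mul (hsp.const_sub 1)).div
      ((((hpN.const_mul 3).const_sub 1).add hsN).const_mul ((s : ℝ) + 1))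
      (by norm_num; positivity)
    have := ih.mul hr
    have e : (lam / 2) ^ s * Real.exp (-lam / 2) / (Nat.factorial s : ℝ) *
        (lam / 4 * (2 - 0) * (1 - 0) / (((s : ℝ) + 1) * (1 - 3 * 0 + 0)))
        = (lam / 2) ^ (s + 1) * Real.exp (-lam / 2) / (Nat.factorial (s + 1) : ℝ) := by
      rw [Nat.factorial_succ]
      push_cast
      have : (s.factorial : ℝ) ≠ 0 := by exact_mod_cast s.factorial_ne_zero
      field_simp
      ring
    rw [e] at this
    refine this.congr' ?_
    filter_upwards [h3, hp.eventually_gt_atTop s] with N h hs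
    exact (aux_step N (p N) s h hs).symm
end

section
/- Fix λ > 0. Let (p_N) be a sequence of natural numbers with p_N → ∞, p_N ≤ N/2, and 4·p_N²/N → λ as N → ∞. Then the signed sum Σ_{s=0}^{p_N} (−1)^s · C(2p_N, s)·C(N − 2p_N, p_N − s) / C(N, p_N) converges, as N → ∞, to e^{−λ}. -/
open Filter

open Polynomial in
lemma aux_poly (m n p : ℕ) :
    ∑ s ∈ Finset.range (p + 1), (-1 : ℝ) ^ s * ((m.choose s : ℝ) * (n.choose (p - s) : ℝ))
      = ∑ k ∈ Finset.range (m + 1),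
        (-2 : ℝ) ^ k * (m.choose k : ℝ) * (if k ≤ p then ((m + n - k).choose (p - k) : ℝ) else 0) := by
  have key : ((1 : ℝ[X]) - X) ^ m * (1 + X) ^ n
      = ∑ k ∈ Finset.range (m + 1),
        C ((-2 : ℝ) ^ k * (m.choose k : ℝ)) * (X ^ k * (1 + X) ^ (m + n - k)) := by
    have h : (1 : ℝ[X]) - X = C (-2) * X + (1 + X) := by
      have : (C (-2) : ℝ[X]) = -2 := by rw [C_neg]; rfl
      rw [this]; ring
    rw [h, add_pow, Finset.sum_mul]
    refine Finset.sum_congr rfl fun k hk => ?_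
    have hk' : k ≤ m := by simpa [Nat.lt_succ_iff] using hk
    have e : m + n - k = (m - k) + n := by omega
    rw [e, pow_add, mul_pow, C_mul, C_pow, C_eq_natCast]
    ring
  have h1 := congrArg (fun q : ℝ[X] => q.coeff p) key
  simp only [finsetSum_coeff, coeff_C_mul, coeff_X_pow_mul', coeff_one_add_X_pow] at h1
  rw [← h1, coeff_mul, Finset.Nat.sum_antidiagonal_eq_sum_range_succ_mk]
  refine Finset.sum_congr rfl fun s _ => ?_
  have h2 : ((1 : ℝ[X]) - X) ^ m = ((1 + X) ^ m : ℝ[X]).comp (C (-1) * X) := by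
    simp [sub_eq_add_neg]
  simp only [h2, comp_C_mul_X_coeff, coeff_one_add_X_pow]
  ring

lemma aux_term (N p k : ℕ) (hpN : p ≤ N) (m : ℕ) (hm : m ≤ N) :
    (m.choose k : ℝ) * (if k ≤ p then ((N - k).choose (p - k) : ℝ) else 0) / (N.choose p : ℝ)
      = (∏ i ∈ Finset.range k, (((m - i : ℕ) : ℝ) * ((p - i : ℕ) : ℝ) / ((N - i : ℕ) : ℝ)))
        / (k.factorial : ℝ) := by
  have hf : (k.factorial : ℝ) ≠ 0 := by positivity
  have hd : ∀ n : ℕ, ∏ i ∈ Finset.range k, ((n - i : ℕ) : ℝ) = k.factorial * (n.choose k : ℝ) := by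
    intro n
    rw [← Nat.cast_prod, ← Nat.descFactorial_eq_prod_range, Nat.descFactorial_eq_factorial_mul_choose]
    push_cast; rfl
  rw [Finset.prod_div_distrib, Finset.prod_mul_distrib, hd, hd, hd]
  split_ifs with h
  · have h0 : (N.choose p : ℝ) ≠ 0 := by exact_mod_cast (Nat.choose_pos hpN).ne'
    have h1 : (N.choose k : ℝ) ≠ 0 := by exact_mod_cast (Nat.choose_pos (h.trans hpN)).ne'
    have h2 : (N.choose p : ℝ) * p.choose k = N.choose k * (N - k).choose (p - k) := by
      exact_mod_cast Nat.choose_mul h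
    field_simp
    linear_combination -(m.choose k : ℝ) * h2
  · simp [Nat.choose_eq_zero_of_lt (not_le.1 h)]

lemma aux_ratio (i : ℕ) (u : ℕ → ℕ) (hu : Tendsto u atTop atTop) :
    Tendsto (fun N => ((u N - i : ℕ) : ℝ) / (u N : ℝ)) atTop (nhds 1) := by
  have hu' : Tendsto (fun N => (u N : ℝ)) atTop atTop := tendsto_natCast_atTop_atTop.comp hu
  have h : Tendsto (fun N => 1 - (i : ℝ) / (u N : ℝ)) atTop (nhds (1 - 0)) :=
    tendsto_const_nhds.sub (tendsto_const_nhds.div_atTop hu')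
  rw [sub_zero] at h
  refine h.congr' ?_
  filter_upwards [hu.eventually_ge_atTop (i + 1)] with N hN
  have : (u N : ℝ) ≠ 0 := by
    have : u N ≠ 0 := by omega
    exact_mod_cast this
  rw [Nat.cast_sub (by omega)]
  field_simp

/-- In the double-scaled limit N → ∞ with 4p²/N → λ, the signed sum
Σ_{s=0}^{p} (−1)^s C(2p, s)·C(N − 2p, p − s)/C(N, p) (the averaged crossing penalty
factor) converges to e^{−λ}. -/
theorem signed_overlap_sum_tendsto_exp
    (lam : ℝ) (hlam : 0 < lam) (p : ℕ → ℕ)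
    (hp : Tendsto p atTop atTop)
    (hple : ∀ N, 2 * p N ≤ N)
    (hlim : Tendsto (fun N : ℕ => 4 * (p N : ℝ) ^ 2 / (N : ℝ)) atTop (nhds lam)) :
    Tendsto
      (fun N : ℕ =>
        ∑ s ∈ Finset.range (p N + 1),
          (-1 : ℝ) ^ s *
            ((Nat.choose (2 * p N) s : ℝ) * (Nat.choose (N - 2 * p N) (p N - s) : ℝ)) /
              (Nat.choose N (p N) : ℝ))
      atTop (nhds (Real.exp (-lam))) := by
  let f : ℕ → ℕ → ℝ := fun N k => (-2 : ℝ) ^ k *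
    ((∏ i ∈ Finset.range k,
      (((2 * p N - i : ℕ) : ℝ) * ((p N - i : ℕ) : ℝ) / ((N - i : ℕ) : ℝ))) / (k.factorial : ℝ))
  have hsum : ∀ N, ∑ s ∈ Finset.range (p N + 1),
          (-1 : ℝ) ^ s *
            ((Nat.choose (2 * p N) s : ℝ) * (Nat.choose (N - 2 * p N) (p N - s) : ℝ)) /
              (Nat.choose N (p N) : ℝ) = ∑' k, f N k := by
    intro N
    have hN := hple N
    rw [← Finset.sum_div, aux_poly, Finset.sum_div,
      tsum_eq_sum (s := Finset.range (2 * p N + 1))]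
    · refine Finset.sum_congr rfl fun k _ => ?_
      simp only [f]
      rw [← aux_term N (p N) k (by omega) (2 * p N) hN, Nat.add_sub_cancel' hN]
      ring
    · intro k hk
      simp only [Finset.mem_range, not_lt] at hk
      simp only [f]
      rw [Finset.prod_eq_zero (i := 2 * p N) (by simp; omega) (by simp)]
      simp
  have hexp : Real.exp (-lam) = ∑' k : ℕ, (-2 : ℝ) ^ k * ((lam / 2) ^ k / (k.factorial : ℝ)) := by
    rw [Real.exp_eq_exp_ℝ, NormedSpace.exp_eq_tsum_div]
    refine tsum_congr fun k => ?_
    rw [← mul_div_assoc, ← mul_pow]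
    congr 2
    ring
  rw [hexp]
  simp_rw [hsum]
  refine tendsto_tsum_of_dominated_convergence
    (bound := fun k : ℕ => (2 * lam) ^ k / (k.factorial : ℝ))
    (Real.summable_pow_div_factorial _) ?_ ?_
  · intro k
    refine Tendsto.const_mul _ (Tendsto.div_const ?_ _)
    have : (lam / 2) ^ k = ∏ i ∈ Finset.range k, lam / 2 := by
      rw [Finset.prod_const, Finset.card_range]
    rw [this]
    refine tendsto_finsetProd _ fun i _ => ?_
    have h2p : Tendsto (fun N => 2 * p N) atTop atTop :=
      tendsto_atTop_mono (fun N => by omega) hp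
    have hh := ((((hlim.div_const 2).mul (aux_ratio i _ h2p)).mul (aux_ratio i p hp)).div
      (aux_ratio i id tendsto_id) one_ne_zero)
    simp only [mul_one, div_one, id] at hh
    refine hh.congr' ?_
    filter_upwards [hp.eventually_ge_atTop 1, eventually_ge_atTop (i + 1)] with N h1 h2
    have e1 : (p N : ℝ) ≠ 0 := by
      have : p N ≠ 0 := by omega
      exact_mod_cast this
    have e2 : (N : ℝ) ≠ 0 := by
      have : N ≠ 0 := by omega
      exact_mod_cast this
    have e3 : ((N - i : ℕ) : ℝ) ≠ 0 := by
      have : N - i ≠ 0 := by omega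
      exact_mod_cast this
    simp only [Pi.div_apply]
    rw [Nat.cast_mul 2 (p N), Nat.cast_ofNat]
    field_simp
    try ring
  · filter_upwards [hlim.eventually_le_const (show lam < 2 * lam by linarith)] with N hN k
    simp only [f]
    rw [norm_mul, norm_div, norm_pow, mul_pow, mul_div_assoc]
    have : ‖(-2 : ℝ)‖ = 2 := by simp
    rw [this, Real.norm_natCast, norm_prod]
    gcongr
    have : lam ^ k = ∏ i ∈ Finset.range k, lam := by simp
    rw [this]
    refine Finset.prod_le_prod (fun _ _ => norm_nonneg _) fun i _ => ?_
    rw [Real.norm_of_nonneg (by positivity)]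
    have hle := hple N
    rcases le_or_gt (p N) i with h | h
    · rw [Nat.sub_eq_zero_of_le h]; simp [hlam.le]
    · have e2 : (0 : ℝ) < N := by
        have : 0 < N := by omega
        exact_mod_cast this
      have e3 : (0 : ℝ) < ((N - i : ℕ) : ℝ) := by
        have : 0 < N - i := by omega
        exact_mod_cast this
      have hb : ((p N - i : ℕ) : ℝ) / ((N - i : ℕ) : ℝ) ≤ (p N : ℝ) / N := by
        rw [div_le_div_iff₀ e3 e2, Nat.cast_sub h.le, Nat.cast_sub (by omega)]
        have : (p N : ℝ) ≤ N := by
          have : p N ≤ N := by omega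
          exact_mod_cast this
        nlinarith [(Nat.cast_nonneg i : (0 : ℝ) ≤ i)]
      have ha : ((2 * p N - i : ℕ) : ℝ) ≤ 2 * p N := by
        have : 2 * p N - i ≤ 2 * p N := by omega
        exact_mod_cast this
      calc _ = ((2 * p N - i : ℕ) : ℝ) * (((p N - i : ℕ) : ℝ) / ((N - i : ℕ) : ℝ)) := by ring
        _ ≤ (2 * p N) * ((p N : ℝ) / N) := by gcongr
        _ = (4 * (p N : ℝ) ^ 2 / (N : ℝ)) / 2 := by ring
        _ ≤ lam := by linarith
end

section
/- Let q be a real number, V the free ℝ-module with basis (e_n)_{n∈ℕ}, and α, α† the linear maps with α†(e_n) = e_{n+1}, α(e_0) = 0, α(e_n) = [n]_q·e_{n−1} for n ≥ 1, where [n]_q = 1 + q + ⋯ + q^{n−1}. Then for all n, n′ ∈ ℕ, the coefficient of e_0 in α^n((α†)^{n′}(e_0)) equals δ_{n,n′} · [n]_q!, where [n]_q! = [n]_q·[n−1]_q ⋯ [1]_q and [0]_q! = 1. -/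
/-- Chord Fock space inner product: ⟨0|α^n (α†)^{n′}|0⟩ = δ_{n,n′}·[n]_q!, i.e. the
coefficient of e_0 in α^n((α†)^{n′}(e_0)) is [n]_q! when n = n′ and 0 otherwise. -/
theorem q_oscillator_inner_product
    (q : ℝ) (a adag : Module.End ℝ (ℕ →₀ ℝ))
    (hadag : ∀ n : ℕ, adag (Finsupp.single n 1) = Finsupp.single (n + 1) 1)
    (ha0 : a (Finsupp.single 0 1) = 0)
    (ha : ∀ n : ℕ,
      a (Finsupp.single (n + 1) 1) =
        (∑ i ∈ Finset.range (n + 1), q ^ i) • Finsupp.single n 1) :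
    ∀ n n' : ℕ,
      ((a ^ n) ((adag ^ n') (Finsupp.single 0 1))) 0 =
        if n = n' then ∏ k ∈ Finset.range n, (∑ i ∈ Finset.range (k + 1), q ^ i) else 0 := by
  have h1 : ∀ m : ℕ, (adag ^ m) (Finsupp.single 0 1) = Finsupp.single m 1 := by
    intro m
    induction m with
    | zero => simp
    | succ m ih => rw [pow_succ', Module.End.mul_apply, ih, hadag]
  intro n
  induction n with
  | zero =>
    intro m
    rw [h1]
    simp [Finsupp.single_apply, eq_comm]
  | succ n ih =>
    intro m
    rw [h1, pow_succ, Module.End.mul_apply]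
    cases m with
    | zero => rw [ha0]; simp
    | succ m =>
      have h2 := ih m
      rw [h1] at h2
      rw [ha, map_smul, Finsupp.smul_apply, h2, smul_eq_mul]
      by_cases h : n = m
      · subst h
        rw [if_pos rfl, if_pos rfl, Finset.prod_range_succ _ n, mul_comm]
      · rw [if_neg h, if_neg (by omega), mul_zero]
end

section
/- Let q be a real number, d ∈ ℕ, and W the free ℝ-module with basis (e_w) indexed by words w ∈ List (Fin d). For each color a ∈ Fin d define linear maps α†_a and α_a on W by: α†_a(e_w) = e_{a::w} (prepend a), and α_a(e_w) = Σ_{i < |w|, w_i = a} q^{N_i} · e_{w∖i}, where w∖i is w with its i-th letter removed and N_i = #{ j < i : w_j ≠ a } is the number of letters before position i differing from a. Then: (i) α_a ∘ α†_a − α†_a ∘ α_a = id_W for every a, and (ii) α_a ∘ α†_b − q · (α†_b ∘ α_a) = 0 for all a ≠ b. -/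
/-- The multi-color q-deformed oscillator algebra of the d-commuting SYK model:
[α_a, α†_a] = 1 and α_a α†_b − q α†_b α_a = 0 for a ≠ b, acting on the free module
whose basis is indexed by words of colors (the colors of the open chords). -/
theorem multicolor_q_oscillator_algebra
    (q : ℝ) (d : ℕ)
    (a adag : Fin d → Module.End ℝ (List (Fin d) →₀ ℝ))
    (hadag : ∀ (c : Fin d) (w : List (Fin d)),
      adag c (Finsupp.single w 1) = Finsupp.single (c :: w) 1)
    (ha : ∀ (c : Fin d) (w : List (Fin d)),
      a c (Finsupp.single w 1) =
        ∑ i : Fin w.length,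
          if w.get i = c then
            (q ^ ((w.take (i : ℕ)).countP fun x => decide (x ≠ c))) •
              Finsupp.single (w.eraseIdx (i : ℕ)) 1
          else 0) :
    (∀ c : Fin d, a c * adag c - adag c * a c = 1) ∧
      (∀ c c' : Fin d, c ≠ c' → a c * adag c' - q • (adag c' * a c) = 0) := by
  have key : ∀ (c c' : Fin d) (w : List (Fin d)),
      a c (adag c' (Finsupp.single w 1)) = (if c' = c then Finsupp.single w 1 else 0) +
        (if c' = c then (1 : ℝ) else q) • adag c' (a c (Finsupp.single w 1)) := by
    intro c c' w
    rw [hadag, ha, ha, map_sum, Finset.smul_sum]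
    refine (Fin.sum_univ_succ (n := w.length) _).trans ?_
    congr 1
    · simp
    · refine Finset.sum_congr rfl fun i _ => ?_
      by_cases h : w.get i = c
      · have h' : (c' :: w).get i.succ = c := h
        rw [if_pos h, if_pos h', map_smul, hadag, smul_smul]
        by_cases hc : c' = c
        · simp [hc]
        · simp [hc, pow_succ, mul_comm]
      · have h' : ¬ (c' :: w).get i.succ = c := h
        rw [if_neg h, if_neg h', map_zero, smul_zero]
  constructor
  · intro c
    refine Finsupp.lhom_ext' fun w => LinearMap.ext_ring ?_
    have := key c c w
    simp only [if_true, one_smul] at this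
    simp [this]
  · intro c c' h
    refine Finsupp.lhom_ext' fun w => LinearMap.ext_ring ?_
    have := key c c' w
    simp only [if_neg h.symm, zero_add] at this
    simp [this]
end

section
/- Let d > 0. The function R_c(z) = √(d/(2π)) · ∫_ℝ e^{−dx²/2}/(z − x) dx, defined for complex z with Im z ≠ 0, is holomorphic there and satisfies the differential equation (1/d)·R_c′(z) + z·R_c(z) − 1 = 0. -/
open MeasureTheory Filter Topology in
theorem gro_aux (d : ℝ) (hd : 0 < d) (z : ℂ) (hz : z.im ≠ 0) :
    ∃ I' : ℂ, HasDerivAt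
      (fun z : ℂ => ∫ x : ℝ, (Real.exp (-(d * x ^ 2) / 2) : ℂ) / (z - (x : ℂ))) I' z ∧
      (d : ℂ) * (Real.sqrt (2 * Real.pi / d) : ℝ) - d * z *
        (∫ x : ℝ, (Real.exp (-(d * x ^ 2) / 2) : ℂ) / (z - (x : ℂ))) - I' = 0 := by
  have hgeq : (fun x : ℝ => Real.exp (-(d * x ^ 2) / 2)) =
      fun x : ℝ => Real.exp (-(d / 2) * x ^ 2) := by
    funext x; congr 1; ring
  have hgR : Integrable (fun x : ℝ => Real.exp (-(d * x ^ 2) / 2)) := by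
    rw [hgeq]; exact integrable_exp_neg_mul_sq (by positivity)
  have hg : Integrable (fun x : ℝ => (Real.exp (-(d * x ^ 2) / 2) : ℂ)) := hgR.ofReal
  have hG : ∫ x : ℝ, (Real.exp (-(d * x ^ 2) / 2) : ℂ) = (Real.sqrt (2 * Real.pi / d) : ℝ) := by
    rw [integral_complex_ofReal, hgeq, integral_gaussian]
    congr 2; field_simp
  have hne : ∀ w : ℂ, w.im ≠ 0 → ∀ x : ℝ, w - (x : ℂ) ≠ 0 := by
    intro w hw x h
    apply hw
    have := congrArg Complex.im h
    simpa using this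
  have hcg : Continuous (fun x : ℝ => (Real.exp (-(d * x ^ 2) / 2) : ℂ)) := by fun_prop
  have hlow : ∀ w : ℂ, ∀ x : ℝ, |w.im| ≤ ‖w - (x : ℂ)‖ := by
    intro w x
    have := Complex.abs_im_le_norm (w - (x : ℂ))
    simpa using this
  have hcF : ∀ w : ℂ, w.im ≠ 0 →
      Continuous (fun x : ℝ => (Real.exp (-(d * x ^ 2) / 2) : ℂ) / (w - (x : ℂ))) := by
    intro w hw
    exact hcg.div (by fun_prop) (hne w hw)
  have hzp : 0 < |z.im| := abs_pos.mpr hz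
  have hF : Integrable (fun x : ℝ => (Real.exp (-(d * x ^ 2) / 2) : ℂ) / (z - (x : ℂ))) := by
    refine (hgR.mul_const (1 / |z.im|)).mono' (hcF z hz).aestronglyMeasurable ?_
    refine Eventually.of_forall fun x => ?_
    rw [norm_div, Complex.norm_real, Real.norm_of_nonneg (Real.exp_pos _).le, div_eq_mul_one_div]
    gcongr
    exact hlow z x
  have hs : {w : ℂ | |z.im| / 2 < |w.im|} ∈ 𝓝 z := by
    refine (isOpen_lt (by fun_prop) (by fun_prop)).mem_nhds ?_
    show |z.im| / 2 < |z.im|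
    linarith
  have hsne : ∀ w : ℂ, |z.im| / 2 < |w.im| → w.im ≠ 0 := by
    intro w hw
    exact abs_pos.mp (by linarith)
  have key := hasDerivAt_integral_of_dominated_loc_of_deriv_le (μ := volume) (𝕜 := ℂ)
    (F := fun (w : ℂ) (x : ℝ) => (Real.exp (-(d * x ^ 2) / 2) : ℂ) / (w - (x : ℂ)))
    (F' := fun (w : ℂ) (x : ℝ) => -(Real.exp (-(d * x ^ 2) / 2) : ℂ) / (w - (x : ℂ)) ^ 2)
    (bound := fun x => Real.exp (-(d * x ^ 2) / 2) * (1 / (|z.im| / 2) ^ 2))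
    (x₀ := z) hs
    (by filter_upwards [hs] with w hw
        exact (hcF w (hsne w hw)).aestronglyMeasurable)
    hF
    (Continuous.aestronglyMeasurable
      (hcg.neg.div (by fun_prop) (fun x => pow_ne_zero 2 (hne z hz x))))
    (by
      refine Eventually.of_forall fun x w hw => ?_
      rw [norm_div, norm_neg, Complex.norm_real, Real.norm_of_nonneg (Real.exp_pos _).le,
        div_eq_mul_one_div, norm_pow]
      gcongr
      exact (le_of_lt hw).trans (hlow w x))
    (hgR.mul_const _)
    (by
      refine Eventually.of_forall fun x w hw => ?_
      have h1 : HasDerivAt (fun w : ℂ => w - (x : ℂ)) 1 w := (hasDerivAt_id w).sub_const _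
      have h2 := (hasDerivAt_const w (Real.exp (-(d * x ^ 2) / 2) : ℂ)).div h1
        (hne w (hsne w hw) x)
      refine HasDerivAt.congr_deriv h2 ?_
      simp)
  obtain ⟨hF'i, hder⟩ := key
  refine ⟨_, hder, ?_⟩
  have hi1 : Integrable (fun x : ℝ => (d : ℂ) * (Real.exp (-(d * x ^ 2) / 2) : ℂ)) :=
    hg.const_mul _
  have hi2 : Integrable (fun x : ℝ => (d : ℂ) * z *
      ((Real.exp (-(d * x ^ 2) / 2) : ℂ) / (z - (x : ℂ)))) := hF.const_mul _
  have hi3 : Integrable (fun x : ℝ => (d : ℂ) * (Real.exp (-(d * x ^ 2) / 2) : ℂ) - (d : ℂ) * z *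
      ((Real.exp (-(d * x ^ 2) / 2) : ℂ) / (z - (x : ℂ)))) := hi1.sub hi2
  have hzero := integral_eq_zero_of_hasDerivAt_of_integrable
    (f := fun x : ℝ => (Real.exp (-(d * x ^ 2) / 2) : ℂ) / (z - (x : ℂ)))
    (f' := fun x : ℝ => (d : ℂ) * (Real.exp (-(d * x ^ 2) / 2) : ℂ) - (d : ℂ) * z *
      ((Real.exp (-(d * x ^ 2) / 2) : ℂ) / (z - (x : ℂ)))
      - -(Real.exp (-(d * x ^ 2) / 2) : ℂ) / (z - (x : ℂ)) ^ 2)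
    (by
      intro x
      have h0 : HasDerivAt (fun x : ℝ => -(d * x ^ 2) / 2) (-(d * x)) x := by
        have := (((hasDerivAt_pow 2 x).const_mul d).neg).div_const 2
        refine HasDerivAt.congr_deriv this ?_
        simp; ring
      have h1 := h0.exp.ofReal_comp
      have h2 : HasDerivAt (fun x : ℝ => z - (x : ℂ)) (-1) x :=
        ((hasDerivAt_id x).ofReal_comp.const_sub z).congr_deriv (by simp)
      have h3 := h1.div h2 (hne z hz x)
      refine HasDerivAt.congr_deriv h3 ?_
      have := hne z hz x
      push_cast
      field_simp
      ring)
    (hi3.sub hF'i) hF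
  rw [integral_sub hi3 hF'i, integral_sub hi1 hi2, integral_const_mul,
    integral_const_mul, hG] at hzero
  exact hzero


/-- The Stieltjes transform R_c(z) = √(d/(2π))∫ e^{−dx²/2}/(z−x) dx of the Gaussian
spectral density is holomorphic off the real axis and satisfies
(1/d)·R_c′(z) + z·R_c(z) − 1 = 0. -/
theorem gaussian_resolvent_ode
    (d : ℝ) (hd : 0 < d) (Rc : ℂ → ℂ)
    (hRc : ∀ z : ℂ, Rc z =
      (Real.sqrt (d / (2 * Real.pi)) : ℂ) *
        ∫ x : ℝ, (Real.exp (-(d * x ^ 2) / 2) : ℂ) / (z - (x : ℂ))) :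
    DifferentiableOn ℂ Rc {z : ℂ | z.im ≠ 0} ∧
      ∀ z : ℂ, z.im ≠ 0 →
        (1 / (d : ℂ)) * deriv Rc z + z * Rc z - 1 = 0 := by
  have hRc' : Rc = fun z => (Real.sqrt (d / (2 * Real.pi)) : ℂ) *
        ∫ x : ℝ, (Real.exp (-(d * x ^ 2) / 2) : ℂ) / (z - (x : ℂ)) := funext hRc
  have hprod : (Real.sqrt (d / (2 * Real.pi)) : ℂ) * (Real.sqrt (2 * Real.pi / d) : ℝ) = 1 := by
    rw [← Complex.ofReal_mul, ← Real.sqrt_mul (by positivity)]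
    have : d / (2 * Real.pi) * (2 * Real.pi / d) = 1 := by
      have := Real.pi_pos
      field_simp
    rw [this]; simp
  have hdc : (d : ℂ) ≠ 0 := by exact_mod_cast hd.ne'
  constructor
  · intro z hz
    obtain ⟨I', h, -⟩ := gro_aux d hd z hz
    rw [hRc']
    exact (h.const_mul _).differentiableAt.differentiableWithinAt
  · intro z hz
    obtain ⟨I', h, he⟩ := gro_aux d hd z hz
    have hD := (h.const_mul (Real.sqrt (d / (2 * Real.pi)) : ℂ)).deriv
    rw [← hRc'] at hD
    rw [hD, hRc z]
    generalize (∫ x : ℝ, (Real.exp (-(d * x ^ 2) / 2) : ℂ) / (z - (x : ℂ))) = J at *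
    have : I' = (d : ℂ) * (Real.sqrt (2 * Real.pi / d) : ℝ) - d * z * J := by
      linear_combination -he
    rw [this]
    field_simp
    linear_combination hprod
end

section
/- Let d ≥ 1 be real, U, Ω ⊆ ℂ open. Suppose F : U → ℂ is differentiable and satisfies F′(u) = 1/(d·(1 − u·F(u))) for all u ∈ U, and suppose R : Ω → ℂ is differentiable with R(z) ≠ 0, R(z) ∈ U, and z/d + (d−1)/(d·R(z)) = F(R(z)) for all z ∈ Ω. Define w(z) = z/d + (1 − 1/d)/R(z). Then R′(z) = d·(1 − w(z)·R(z))·w′(z) on Ω; in particular, wherever w′(z) ≠ 0, the function r = R satisfies the same equation as the Gaussian resolvent in the variable w: (1/d)·(dr/dw) + w·r − 1 = 0. -/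
theorem aux_ne (d : ℂ) (hd : d ≠ 0) (U : Set ℂ) (hU : IsOpen U) (F : ℂ → ℂ)
    (hF : ∀ u ∈ U, HasDerivAt F (1 / (d * (1 - u * F u))) u) (u : ℂ) (hu : u ∈ U) :
    1 - u * F u ≠ 0 := by
  intro h0
  have hdiff : DifferentiableOn ℂ F U := fun x hx =>
    (hF x hx).differentiableAt.differentiableWithinAt
  have hc : ContinuousAt (deriv F) u :=
    ((hdiff.deriv hU).differentiableAt (hU.mem_nhds hu)).continuousAt
  have hF0 : HasDerivAt F 0 u := by
    have := hF u hu
    rwa [h0, mul_zero, div_zero] at this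
  have hg : HasDerivAt (fun x => 1 - x * F x) (-(1 * F u + u * 0)) u :=
    ((hasDerivAt_id u).mul hF0).const_sub 1
  have hFu : F u ≠ 0 := by
    intro h
    simp [h] at h0
  have hne : -(1 * F u + u * 0) ≠ 0 := by simpa using hFu
  have hev := hg.eventually_ne hne (c := 0)
  have ht : Filter.Tendsto (fun x => deriv F x * (d * (1 - x * F x))) (nhdsWithin u {u}ᶜ)
      (nhds (deriv F u * (d * (1 - u * F u)))) :=
    (hc.mul (continuousAt_const.mul hg.continuousAt)).tendsto.mono_left nhdsWithin_le_nhds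
  have ht1 : Filter.Tendsto (fun x => deriv F x * (d * (1 - x * F x))) (nhdsWithin u {u}ᶜ)
      (nhds 1) := by
    refine tendsto_const_nhds.congr' ?_
    filter_upwards [hev, nhdsWithin_le_nhds (hU.mem_nhds hu)] with x hx hxU
    rw [(hF x hxU).deriv]
    exact (one_div_mul_cancel (mul_ne_zero hd hx)).symm
  have := tendsto_nhds_unique ht ht1
  simp [h0] at this

/-- Free-probability subordination for the q = 0 d-commuting SYK resolvent: if F is the
functional inverse of the Gaussian resolvent, so F′(u) = 1/(d(1 − uF(u))), and R obeys the
subordination relation z/d + (d−1)/(dR(z)) = F(R(z)), then with w(z) = z/d + (1−1/d)/R(z)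
one has R′(z) = d(1 − w(z)R(z))·w′(z); in particular, where w′(z) ≠ 0, R satisfies the
Gaussian resolvent equation (1/d)(dR/dw) + wR − 1 = 0 in the variable w. -/
theorem subordination_resolvent_ode
    (d : ℝ) (hd : 1 ≤ d) (U Ω : Set ℂ) (hU : IsOpen U) (hΩ : IsOpen Ω)
    (F R : ℂ → ℂ)
    (hF : ∀ u ∈ U, HasDerivAt F (1 / ((d : ℂ) * (1 - u * F u))) u)
    (hRdiff : ∀ z ∈ Ω, DifferentiableAt ℂ R z)
    (hRne : ∀ z ∈ Ω, R z ≠ 0)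
    (hRU : ∀ z ∈ Ω, R z ∈ U)
    (hsub : ∀ z ∈ Ω, z / (d : ℂ) + ((d : ℂ) - 1) / ((d : ℂ) * R z) = F (R z)) :
    let w : ℂ → ℂ := fun z => z / (d : ℂ) + (1 - 1 / (d : ℂ)) / R z
    (∀ z ∈ Ω, deriv R z = (d : ℂ) * (1 - w z * R z) * deriv w z) ∧
      ∀ z ∈ Ω, deriv w z ≠ 0 →
        (1 / (d : ℂ)) * (deriv R z / deriv w z) + w z * R z - 1 = 0 := by
  intro w
  have hd0 : (d : ℂ) ≠ 0 := by
    have : d ≠ 0 := by linarith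
    exact_mod_cast this
  have hw : ∀ z ∈ Ω, w z = F (R z) := by
    intro z hz
    have := hRne z hz
    rw [← hsub z hz]
    simp only [w]
    field_simp
  have key : ∀ z ∈ Ω, 1 - w z * R z ≠ 0 ∧
      deriv R z = (d : ℂ) * (1 - w z * R z) * deriv w z := by
    intro z hz
    have hn := aux_ne d hd0 U hU F hF (R z) (hRU z hz)
    have hn' : 1 - w z * R z ≠ 0 := by rwa [hw z hz, mul_comm]
    refine ⟨hn', ?_⟩
    have hwe : w =ᶠ[nhds z] (F ∘ R) := by
      filter_upwards [hΩ.mem_nhds hz] with x hx using hw x hx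
    have hD := ((hF _ (hRU z hz)).comp z (hRdiff z hz).hasDerivAt).deriv
    rw [hwe.deriv_eq, hD, hw z hz, mul_comm (F (R z)) (R z), ← mul_assoc,
      mul_one_div_cancel (mul_ne_zero hd0 hn), one_mul]
  refine ⟨fun z hz => (key z hz).2, fun z hz hne => ?_⟩
  rw [(key z hz).2]
  field_simp
  ring
end

section
/- Let d > 0 and let w ∈ ℂ with Im w > 0. Define the (complex-extended) Dawson function D(u) = e^{−u²}·u·∫_0^1 e^{t²u²} dt. Then √(d/(2π)) · ∫_ℝ e^{−dx²/2}/(w − x) dx = √(2d)·D(√(d/2)·w) − i·√(πd/2)·e^{−dw²/2}. For Im w < 0 the same identity holds with + i·√(πd/2)·e^{−dw²/2} instead. -/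
open MeasureTheory Set Filter Topology in
lemma grd_int (b : ℝ) (hb : 0 < b) (z : ℂ) :
    Integrable (fun s : ℝ => Complex.exp (-(b : ℂ) * s ^ 2 + z * s)) := by
  have := integrable_cexp_quadratic (b := (b : ℂ)) (by simpa using hb) z 0
  simpa using this

open MeasureTheory Set Filter Topology in
lemma grd_deriv (b : ℝ) (hb : 0 < b) (z : ℂ) :
    Integrable (fun s : ℝ => (s : ℂ) * Complex.exp (-(b : ℂ) * s ^ 2 + z * s))
      (volume.restrict (Ioi (0 : ℝ))) ∧
    HasDerivAt (fun z : ℂ => ∫ s in Ioi (0 : ℝ), Complex.exp (-(b : ℂ) * s ^ 2 + z * s))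
      (∫ s in Ioi (0 : ℝ), (s : ℂ) * Complex.exp (-(b : ℂ) * s ^ 2 + z * s)) z := by
  refine hasDerivAt_integral_of_dominated_loc_of_deriv_le
    (F := fun (z : ℂ) (s : ℝ) => Complex.exp (-(b : ℂ) * s ^ 2 + z * s))
    (F' := fun (z : ℂ) (s : ℝ) => (s : ℂ) * Complex.exp (-(b : ℂ) * s ^ 2 + z * s))
    (s := Metric.ball z 1)
    (bound := fun s : ℝ => ‖Complex.exp (-(b : ℂ) * s ^ 2 + ((z.re + 2 : ℝ) : ℂ) * s)‖)
    (Metric.ball_mem_nhds _ one_pos) ?_ ?_ ?_ ?_ ?_ ?_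
  · refine Eventually.of_forall fun x => Continuous.aestronglyMeasurable (by fun_prop)
  · exact (grd_int b hb z).integrableOn
  · exact Continuous.aestronglyMeasurable (by fun_prop)
  · refine (ae_restrict_iff' measurableSet_Ioi).2 (Eventually.of_forall fun s hs x hx => ?_)
    have hs : 0 < s := hs
    have h1 : x.re ≤ z.re + 1 := by
      have := (Complex.abs_re_le_norm (x - z))
      rw [Metric.mem_ball, dist_eq_norm] at hx
      have h2 := le_abs_self (x - z).re
      simp only [Complex.sub_re] at *
      linarith
    rw [norm_mul, Complex.norm_exp, Complex.norm_exp, Complex.norm_real, Real.norm_of_nonneg hs.le]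
    have e1 : (-(b : ℂ) * s ^ 2 + x * s).re = -b * s ^ 2 + x.re * s := by
      norm_cast; simp [← Complex.ofReal_pow]
    have e2 : (-(b : ℂ) * s ^ 2 + ((z.re + 2 : ℝ) : ℂ) * s).re = -b * s ^ 2 + (z.re + 2) * s := by
      norm_cast
    rw [e1, e2]
    have h3 : s ≤ Real.exp s := by linarith [Real.add_one_le_exp s]
    calc s * Real.exp (-b * s ^ 2 + x.re * s)
        ≤ Real.exp s * Real.exp (-b * s ^ 2 + (z.re + 1) * s) := by gcongr
      _ = _ := by rw [← Real.exp_add]; ring_nf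
  · exact ((grd_int b hb _).integrableOn (s := Ioi (0 : ℝ))).norm
  · refine Eventually.of_forall fun s x hx => ?_
    have : HasDerivAt (fun x : ℂ => -(b : ℂ) * s ^ 2 + x * s) (s : ℂ) x := by
      simpa using ((hasDerivAt_id x).mul_const (s : ℂ)).const_add (-(b : ℂ) * s ^ 2)
    simpa [mul_comm] using this.cexp

open MeasureTheory Set Filter Topology in
lemma grd_ibp (b : ℝ) (hb : 0 < b) (z : ℂ) :
    z * (∫ s in Ioi (0 : ℝ), Complex.exp (-(b : ℂ) * s ^ 2 + z * s)) -
      2 * b * (∫ s in Ioi (0 : ℝ), (s : ℂ) * Complex.exp (-(b : ℂ) * s ^ 2 + z * s)) = -1 := by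
  have i1 := (grd_int b hb z).integrableOn (s := Ioi (0 : ℝ))
  have i2 := (grd_deriv b hb z).1
  have i3 : IntegrableOn (fun s : ℝ => z * Complex.exp (-(b : ℂ) * s ^ 2 + z * s) -
      2 * b * ((s : ℂ) * Complex.exp (-(b : ℂ) * s ^ 2 + z * s))) (Ioi 0) :=
    (i1.const_mul z).sub (i2.const_mul _)
  have hd : ∀ s : ℝ, HasDerivAt (fun s : ℝ => Complex.exp (-(b : ℂ) * s ^ 2 + z * s))
      (z * Complex.exp (-(b : ℂ) * s ^ 2 + z * s) -
      2 * b * ((s : ℂ) * Complex.exp (-(b : ℂ) * s ^ 2 + z * s))) s := by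
    intro s
    have h1 : HasDerivAt (fun x : ℂ => -(b : ℂ) * x ^ 2 + z * x) (-(b : ℂ) * (2 * s) + z) (s : ℂ) := by
      have h2 := (((hasDerivAt_pow 2 (s : ℂ)).const_mul (-(b : ℂ))).add
        ((hasDerivAt_id (s : ℂ)).const_mul z))
      refine HasDerivAt.congr_deriv (f' := _) h2 ?_
      simp
    convert h1.cexp.comp_ofReal using 1
    ring
  have ht := tendsto_zero_of_hasDerivAt_of_integrableOn_Ioi (fun x _ => hd x) i3 i1
  have := integral_Ioi_of_hasDerivAt_of_tendsto' (fun x _ => hd x) i3 ht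
  rw [integral_sub (i1.const_mul z) (i2.const_mul _), integral_const_mul, integral_const_mul] at this
  rw [this]; simp

open MeasureTheory Set Filter Topology in
lemma grd_half (b : ℝ) (hb : 0 < b) (z : ℂ) :
    Complex.exp (-z ^ 2 / (4 * b)) *
      (∫ s in Ioi (0 : ℝ), Complex.exp (-(b : ℂ) * s ^ 2 + z * s)) =
    (Real.sqrt (Real.pi / b) / 2 : ℝ) +
      z / (2 * b) * ∫ r : ℝ in (0 : ℝ)..1, Complex.exp (-((r : ℂ) * z) ^ 2 / (4 * b)) := by
  set G : ℂ → ℂ := fun z => ∫ s in Ioi (0 : ℝ), Complex.exp (-(b : ℂ) * s ^ 2 + z * s) with hG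
  have hb' : (b : ℂ) ≠ 0 := by exact_mod_cast hb.ne'
  have hGd : ∀ z, HasDerivAt G ((1 + z * G z) / (2 * b)) z := by
    intro z
    convert (grd_deriv b hb z).2 using 1
    have := grd_ibp b hb z
    rw [div_eq_iff (by simpa using hb')]
    linear_combination this
  have hP : ∀ r : ℝ, HasDerivAt
      (fun r : ℝ => Complex.exp (-((r : ℂ) * z) ^ 2 / (4 * b)) * G (r * z))
      (z / (2 * b) * Complex.exp (-((r : ℂ) * z) ^ 2 / (4 * b))) r := by
    intro r
    have h0 : HasDerivAt (fun x : ℂ => x * z) z (r : ℂ) := by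
      simpa using (hasDerivAt_id (r : ℂ)).mul_const z
    have h1 : HasDerivAt (fun x : ℂ => -(x * z) ^ 2 / (4 * b))
        (-(2 * (r * z) * z) / (4 * b)) (r : ℂ) := by
      simpa using ((h0.pow 2).neg.div_const (4 * (b : ℂ)))
    have h2 := (hGd (r * z)).comp (r : ℂ) h0
    refine HasDerivAt.congr_deriv (f' := _) (h1.cexp.mul h2).comp_ofReal ?_
    simp only [Function.comp]
    generalize Complex.exp (-((r : ℂ) * z) ^ 2 / (4 * b)) = X
    field_simp
    ring
  have hint := intervalIntegral.integral_eq_sub_of_hasDerivAt (a := 0) (b := 1) (fun r _ => hP r)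
    (Continuous.intervalIntegrable (by fun_prop) _ _)
  rw [intervalIntegral.integral_const_mul] at hint
  have hG0 : G 0 = (Real.sqrt (Real.pi / b) / 2 : ℝ) := by
    rw [← integral_gaussian_Ioi b, ← integral_complex_ofReal]
    simp [hG]
  rw [hint, ← hG0]
  simp [hG]

open MeasureTheory Set Filter Topology in
lemma grd_fubini (d : ℝ) (hd : 0 < d) (w : ℂ) (hw : 0 < w.im) :
    (∫ x : ℝ, (Real.exp (-(d * x ^ 2) / 2) : ℂ) / (w - (x : ℂ))) =
      -Complex.I * (Real.sqrt (Real.pi / (d / 2)) : ℂ) *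
      ∫ s in Ioi (0 : ℝ), Complex.exp (-((1 / (2 * d) : ℝ) : ℂ) * s ^ 2 + (Complex.I * w) * s) := by
  have hd' : (d : ℂ) ≠ 0 := by exact_mod_cast hd.ne'
  have h1 : ∀ x : ℝ, (Real.exp (-(d * x ^ 2) / 2) : ℂ) / (w - (x : ℂ)) =
      ∫ s in Ioi (0 : ℝ), (-Complex.I) * ((Real.exp (-(d * x ^ 2) / 2) : ℂ) *
        Complex.exp (Complex.I * (w - x) * s)) := by
    intro x
    have hre : (Complex.I * (w - x)).re < 0 := by simpa using hw
    rw [integral_const_mul, integral_const_mul, integral_exp_mul_complex_Ioi hre]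
    have hne : w - x ≠ 0 := by
      intro h
      rw [h] at hre; simp at hre
    simp only [Complex.ofReal_zero, mul_zero, Complex.exp_zero]
    have := Complex.I_ne_zero
    field_simp
  simp_rw [h1]
  rw [integral_integral_swap]
  · rw [← integral_const_mul]
    congr 1
    ext s
    have hf := fourierIntegral_gaussian (b := ((d / 2 : ℝ) : ℂ)) (by simpa using hd) (-(s : ℂ))
    have hc : ((Real.pi : ℂ) / ((d / 2 : ℝ) : ℂ)) ^ (1 / 2 : ℂ) =
        (Real.sqrt (Real.pi / (d / 2)) : ℂ) := by
      rw [Real.sqrt_eq_rpow, Complex.ofReal_cpow (by positivity)]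
      push_cast; rfl
    rw [hc] at hf
    rw [integral_const_mul, mul_assoc (-Complex.I)]
    congr 1
    rw [Complex.exp_add]
    have : ∀ x : ℝ, (Real.exp (-(d * x ^ 2) / 2) : ℂ) * Complex.exp (Complex.I * (w - x) * s) =
        Complex.exp (Complex.I * w * s) * (Complex.exp (Complex.I * (-(s : ℂ)) * x) *
          Complex.exp (-((d / 2 : ℝ) : ℂ) * x ^ 2)) := by
      intro x
      push_cast
      simp only [← Complex.exp_add]
      congr 1; ring
    simp_rw [this]
    rw [integral_const_mul, hf]
    have e : -(-(s : ℂ)) ^ 2 / (4 * ((d / 2 : ℝ) : ℂ)) = -((1 / (2 * d) : ℝ) : ℂ) * s ^ 2 := by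
      push_cast
      field_simp
      ring
    rw [e]; ring
  · have hA : Integrable (fun x : ℝ => Real.exp (-(d / 2) * x ^ 2)) :=
      integrable_exp_neg_mul_sq (by positivity)
    have hB : Integrable (fun s : ℝ => Real.exp (-w.im * s)) (volume.restrict (Ioi 0)) :=
      integrableOn_exp_mul_Ioi (by linarith) 0
    refine (hA.mul_prod hB).mono' (Continuous.aestronglyMeasurable (by
      unfold Function.uncurry; fun_prop)) (Eventually.of_forall fun p => ?_)
    obtain ⟨x, s⟩ := p
    simp only [Function.uncurry, norm_mul, norm_neg, Complex.norm_I, one_mul, Complex.norm_real,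
      Complex.norm_exp, Real.norm_eq_abs, Real.abs_exp]
    apply le_of_eq
    congr 2
    · ring
    · simp

lemma grd_upper (d : ℝ) (hd : 0 < d) (D : ℂ → ℂ)
    (hD : ∀ u : ℂ, D u =
      Complex.exp (-u ^ 2) * u * ∫ t : ℝ in (0 : ℝ)..1, Complex.exp ((t : ℂ) ^ 2 * u ^ 2))
    (w : ℂ) (hw : 0 < w.im) :
        (Real.sqrt (d / (2 * Real.pi)) : ℂ) *
            (∫ x : ℝ, (Real.exp (-(d * x ^ 2) / 2) : ℂ) / (w - (x : ℂ))) =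
          (Real.sqrt (2 * d) : ℂ) * D ((Real.sqrt (d / 2) : ℂ) * w) -
            Complex.I * (Real.sqrt (Real.pi * d / 2) : ℂ) * Complex.exp (-(d : ℂ) * w ^ 2 / 2) := by
  have hd' : (d : ℂ) ≠ 0 := by exact_mod_cast hd.ne'
  have hpi := Real.pi_pos
  rw [grd_fubini d hd w hw, hD]
  have h := grd_half (1 / (2 * d)) (by positivity) (Complex.I * w)
  set G := ∫ s in Set.Ioi (0 : ℝ),
    Complex.exp (-((1 / (2 * d) : ℝ) : ℂ) * s ^ 2 + (Complex.I * w) * s)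
  have c1 : (Real.sqrt (d / (2 * Real.pi)) : ℂ) * (Real.sqrt (Real.pi / (d / 2)) : ℂ) = 1 := by
    rw [← Complex.ofReal_mul, ← Real.sqrt_mul (by positivity)]
    have : d / (2 * Real.pi) * (Real.pi / (d / 2)) = 1 := by field_simp
    simp [this]
  have c2 : (Real.sqrt (2 * d) : ℂ) * (Real.sqrt (d / 2) : ℂ) = d := by
    rw [← Complex.ofReal_mul, ← Real.sqrt_mul (by positivity)]
    have : 2 * d * (d / 2) = d ^ 2 := by ring
    rw [this, Real.sqrt_sq hd.le]
  have c3 : ((Real.sqrt (d / 2) : ℂ) * w) ^ 2 = d * w ^ 2 / 2 := by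
    rw [mul_pow, ← Complex.ofReal_pow, Real.sq_sqrt (by positivity)]
    push_cast; ring
  have c4 : Real.sqrt (Real.pi / (1 / (2 * d))) / 2 = Real.sqrt (Real.pi * d / 2) := by
    have : Real.pi / (1 / (2 * d)) = 2 ^ 2 * (Real.pi * d / 2) := by field_simp
    rw [this, Real.sqrt_mul (by positivity), Real.sqrt_sq (by norm_num)]; ring
  have c5 : ∀ r : ℝ, Complex.exp (-((r : ℂ) * (Complex.I * w)) ^ 2 / (4 * ((1 / (2 * d) : ℝ) : ℂ)))
      = Complex.exp ((r : ℂ) ^ 2 * (d * w ^ 2 / 2)) := by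
    intro r
    congr 1
    push_cast
    simp only [mul_pow, Complex.I_sq]
    field_simp; ring
  have c6 : -(Complex.I * w) ^ 2 / (4 * ((1 / (2 * d) : ℝ) : ℂ)) = d * w ^ 2 / 2 := by
    push_cast
    simp only [mul_pow, Complex.I_sq]
    field_simp; ring
  have c7 : (Complex.I * w) / (2 * ((1 / (2 * d) : ℝ) : ℂ)) = Complex.I * w * d := by
    push_cast
    field_simp
  have c8 : -(d : ℂ) * w ^ 2 / 2 = -(d * w ^ 2 / 2) := by ring
  simp_rw [c5] at h
  rw [c4, c6, c7] at h
  rw [c3, c8]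
  set J := ∫ t : ℝ in (0 : ℝ)..1, Complex.exp ((t : ℂ) ^ 2 * (d * w ^ 2 / 2))
  have hE : Complex.exp (-(d * w ^ 2 / 2)) * Complex.exp (d * w ^ 2 / 2) = 1 := by
    rw [← Complex.exp_add]; simp
  set E := Complex.exp (d * w ^ 2 / 2)
  set E' := Complex.exp (-(d * w ^ 2 / 2))
  linear_combination (-Complex.I * G) * c1 - E' * w * J * c2 - Complex.I * E' * h
    + Complex.I * G * hE - E' * w * d * J * Complex.I_sq

/-- Closed form of the Gaussian Stieltjes transform in terms of the (complex-extended)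
Dawson function D(u) = e^{−u²}·u·∫₀¹ e^{t²u²} dt:
√(d/(2π))∫ e^{−dx²/2}/(w−x)dx = √(2d)·D(√(d/2)w) ∓ i√(πd/2)e^{−dw²/2} for ±Im w > 0. -/
theorem gaussian_resolvent_dawson
    (d : ℝ) (hd : 0 < d) (D : ℂ → ℂ)
    (hD : ∀ u : ℂ, D u =
      Complex.exp (-u ^ 2) * u * ∫ t : ℝ in (0 : ℝ)..1, Complex.exp ((t : ℂ) ^ 2 * u ^ 2)) :
    ∀ w : ℂ,
      (0 < w.im →
        (Real.sqrt (d / (2 * Real.pi)) : ℂ) *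
            (∫ x : ℝ, (Real.exp (-(d * x ^ 2) / 2) : ℂ) / (w - (x : ℂ))) =
          (Real.sqrt (2 * d) : ℂ) * D ((Real.sqrt (d / 2) : ℂ) * w) -
            Complex.I * (Real.sqrt (Real.pi * d / 2) : ℂ) * Complex.exp (-(d : ℂ) * w ^ 2 / 2)) ∧
      (w.im < 0 →
        (Real.sqrt (d / (2 * Real.pi)) : ℂ) *
            (∫ x : ℝ, (Real.exp (-(d * x ^ 2) / 2) : ℂ) / (w - (x : ℂ))) =
          (Real.sqrt (2 * d) : ℂ) * D ((Real.sqrt (d / 2) : ℂ) * w) +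
            Complex.I * (Real.sqrt (Real.pi * d / 2) : ℂ) * Complex.exp (-(d : ℂ) * w ^ 2 / 2)) := by

  intro w
  refine ⟨grd_upper d hd D hD w, fun hw => ?_⟩
  have h := grd_upper d hd D hD (-w) (by simpa using hw)
  have hDo : D ((Real.sqrt (d / 2) : ℂ) * (-w)) = -D ((Real.sqrt (d / 2) : ℂ) * w) := by
    rw [hD, hD]; simp only [mul_neg, neg_sq, neg_mul]
  have hF : (∫ x : ℝ, (Real.exp (-(d * x ^ 2) / 2) : ℂ) / (-w - (x : ℂ))) =
      -∫ x : ℝ, (Real.exp (-(d * x ^ 2) / 2) : ℂ) / (w - (x : ℂ)) := by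
    rw [← MeasureTheory.integral_neg_eq_self, ← MeasureTheory.integral_neg]
    congr 1
    ext x
    rw [← div_neg]
    push_cast
    congr 1
    · ring_nf
    · ring
  rw [hDo, hF, neg_sq] at h
  linear_combination -h
end

section
/- Let d > 1 be real, β > 0, and ω > 0 satisfy ω·β < π and ω = √(1 − 1/d)·cos(ωβ/2). Define J(τ₁, τ₂) = 2·log(cos(ωβ/2)) − 2·log(cos(ω·(τ₁ − τ₂ − β/2))) for 0 ≤ τ₂ ≤ τ₁ ≤ β. Then: (i) ∂²J/∂τ₁∂τ₂ = −2·(1 − 1/d)·e^{J(τ₁,τ₂)} on the open domain 0 < τ₂ < τ₁ < β, and (ii) J satisfies the boundary conditions J(τ, τ) = 0 and J(β, 0) = 0. -/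
/-- The homogeneous translation-invariant saddle of the coarse-grained path integral of the
d-commuting SYK model at q → 1: J(τ₁,τ₂) = 2log cos(ωβ/2) − 2log cos(ω(τ₁−τ₂−β/2)) solves
the Liouville-like equation ∂₁∂₂J = −2(1−1/d)e^J with boundary conditions
J(τ,τ) = J(β,0) = 0. -/
theorem liouville_saddle
    (d β ω : ℝ) (hd : 1 < d) (hβ : 0 < β) (hω : 0 < ω)
    (hωβ : ω * β < Real.pi)
    (hsaddle : ω = Real.sqrt (1 - 1 / d) * Real.cos (ω * β / 2)) :
    let J : ℝ → ℝ → ℝ := fun τ₁ τ₂ =>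
      2 * Real.log (Real.cos (ω * β / 2)) - 2 * Real.log (Real.cos (ω * (τ₁ - τ₂ - β / 2)))
    (∀ τ₁ τ₂ : ℝ, 0 < τ₂ → τ₂ < τ₁ → τ₁ < β →
        deriv (fun t₂ => deriv (fun t₁ => J t₁ t₂) τ₁) τ₂ =
          -2 * (1 - 1 / d) * Real.exp (J τ₁ τ₂)) ∧
      (∀ τ ∈ Set.Icc (0 : ℝ) β, J τ τ = 0) ∧ J β 0 = 0 := by
  intro J
  have hc : 0 < Real.cos (ω * β / 2) := by
    apply Real.cos_pos_of_mem_Ioo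
    constructor <;> nlinarith [mul_pos hω hβ, Real.pi_pos]
  have hd1 : 0 ≤ 1 - 1 / d := by
    have : 1 / d ≤ 1 := by
      rw [div_le_one (by linarith)]
      exact hd.le
    linarith
  have hsq : ω ^ 2 = (1 - 1 / d) * Real.cos (ω * β / 2) ^ 2 := by
    conv_lhs => rw [hsaddle]
    rw [mul_pow, Real.sq_sqrt hd1]
  refine ⟨?_, ?_, ?_⟩
  · intro τ₁ τ₂ h0 h12 h1
    have hcos : ∀ t ∈ Set.Ioo 0 τ₁, 0 < Real.cos (ω * (τ₁ - t - β / 2)) := by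
      intro t ht
      apply Real.cos_pos_of_mem_Ioo
      have h2 := mul_pos hω (sub_pos.2 ht.2)
      have h3 : 0 < ω * (β - (τ₁ - t)) := mul_pos hω (by linarith [ht.1])
      constructor <;> nlinarith
    have hlin : ∀ t s : ℝ, HasDerivAt (fun x : ℝ => ω * (x - t - β / 2)) ω s := by
      intro t s
      simpa using ((((hasDerivAt_id s).sub_const t).sub_const (β / 2)).const_mul ω)
    have hlin2 : HasDerivAt (fun x : ℝ => ω * (τ₁ - x - β / 2)) (-ω) τ₂ := by
      simpa using ((((hasDerivAt_id τ₂).const_sub τ₁).sub_const (β / 2)).const_mul ω)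
    have hinner : ∀ t ∈ Set.Ioo 0 τ₁, deriv (fun t₁ => J t₁ t) τ₁ =
        2 * ω * Real.tan (ω * (τ₁ - t - β / 2)) := by
      intro t ht
      have h := (((hlin t τ₁).cos.log (hcos t ht).ne').const_mul 2).const_sub
        (2 * Real.log (Real.cos (ω * β / 2)))
      refine h.deriv.trans ?_
      rw [Real.tan_eq_sin_div_cos]
      ring
    have hev : (fun t₂ => deriv (fun t₁ => J t₁ t₂) τ₁) =ᶠ[nhds τ₂]
        fun t => 2 * ω * Real.tan (ω * (τ₁ - t - β / 2)) := by
      filter_upwards [Ioo_mem_nhds h0 h12] with t ht using hinner t ht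
    have hp := hcos τ₂ ⟨h0, h12⟩
    rw [hev.deriv_eq]
    have h := (((Real.hasDerivAt_tan hp.ne').comp τ₂ hlin2).const_mul (2 * ω))
    refine h.deriv.trans ?_
    have hexp : Real.exp (J τ₁ τ₂) =
        Real.cos (ω * β / 2) ^ 2 / Real.cos (ω * (τ₁ - τ₂ - β / 2)) ^ 2 := by
      simp only [J]
      rw [Real.exp_sub, mul_comm 2, mul_comm 2, Real.exp_mul, Real.exp_mul, Real.exp_log hc,
        Real.exp_log hp]
      norm_num
    rw [hexp]
    have : -2 * (1 - 1 / d) * (Real.cos (ω * β / 2) ^ 2 / Real.cos (ω * (τ₁ - τ₂ - β / 2)) ^ 2)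
      = -2 * ω ^ 2 / Real.cos (ω * (τ₁ - τ₂ - β / 2)) ^ 2 := by
      rw [hsq]; ring
    rw [this]
    ring
  · intro τ _
    simp only [J]
    rw [show ω * (τ - τ - β / 2) = -(ω * β / 2) by ring, Real.cos_neg]
    ring
  · simp only [J]
    rw [show ω * (β - 0 - β / 2) = ω * β / 2 by ring]
    ring
end

section
/- Let β > 0 and x ∈ (0, π), and set ω = x/β. Define J(u) = 2·log(cos(x/2)) − 2·log(cos(ω·(u − β/2))) for u ∈ [0, β]. Then the on-shell action integral evaluates to ∫_0^β ∫_0^τ (1 − J(τ − τ′)/2)·e^{J(τ − τ′)} dτ′ dτ = β²·( sin x / x − (1/2)·cos²(x/2) ). -/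
theorem onshell_aux_deriv (w b A u : ℝ) (hw : w ≠ 0) (hc : 0 < Real.cos (w * (u - b))) :
    HasDerivAt (fun u => (1 / w) * ((2 - A) * Real.tan (w * (u - b))
      + Real.tan (w * (u - b)) * Real.log (Real.cos (w * (u - b))) - w * (u - b)))
      ((1 - A + Real.log (Real.cos (w * (u - b)))) / Real.cos (w * (u - b)) ^ 2) u := by
  have hv : HasDerivAt (fun u => w * (u - b)) w u := by
    simpa using ((hasDerivAt_id u).sub_const b).const_mul w
  have ht := (Real.hasDerivAt_tan hc.ne').comp u hv
  have hl := (hv.cos).log hc.ne'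
  have h := ((((ht.const_mul (2 - A)).add (ht.mul hl)).sub hv).const_mul (1 / w))
  refine h.congr_deriv ?_
  simp only [Function.comp, Real.tan_eq_sin_div_cos]
  have hs := Real.sin_sq_add_cos_sq (w * (u - b))
  have hne := hc.ne'
  set C := Real.cos (w * (u - b))
  set S := Real.sin (w * (u - b))
  have hS : S ^ 2 = 1 - C ^ 2 := by linarith
  field_simp
  rw [hS]
  ring

/-- The on-shell value of the coarse-grained action on the SYK-type saddle
e^{J(u)} = cos²(x/2)/cos²(ω(u−β/2)) with ω = x/β:
∫₀^β ∫₀^τ (1 − J/2)e^J dτ′dτ = β²(sin x/x − ½cos²(x/2)). -/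
theorem onshell_action_value
    (β x : ℝ) (hβ : 0 < β) (hx : x ∈ Set.Ioo 0 Real.pi) :
    let ω := x / β
    let J : ℝ → ℝ := fun u =>
      2 * Real.log (Real.cos (x / 2)) - 2 * Real.log (Real.cos (ω * (u - β / 2)))
    (∫ τ in (0 : ℝ)..β, ∫ τ' in (0 : ℝ)..τ,
        (1 - J (τ - τ') / 2) * Real.exp (J (τ - τ'))) =
      β ^ 2 * (Real.sin x / x - (1 / 2) * Real.cos (x / 2) ^ 2) := by
  intro ω J
  obtain ⟨hx0, hxp⟩ := hx
  have hω : 0 < ω := div_pos hx0 hβ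
  have hωβ : ω * β = x := div_mul_cancel₀ x hβ.ne'
  have hc : 0 < Real.cos (x / 2) := Real.cos_pos_of_mem_Ioo ⟨by linarith, by linarith⟩
  have hcos : ∀ u ∈ Set.Icc 0 β, 0 < Real.cos (ω * (u - β / 2)) := by
    intro u hu
    have h1 : 0 ≤ ω * u := mul_nonneg hω.le hu.1
    have h2 : ω * u ≤ ω * β := mul_le_mul_of_nonneg_left hu.2 hω.le
    have h3 : ω * (u - β / 2) = ω * u - x / 2 := by rw [← hωβ]; ring
    rw [h3]
    exact Real.cos_pos_of_mem_Ioo ⟨by linarith, by linarith⟩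
  set A := Real.log (Real.cos (x / 2)) with hA
  set c := Real.cos (x / 2) with hcdef
  let F : ℝ → ℝ := fun u => c ^ 2 * ((1 / ω) * ((2 - A) * Real.tan (ω * (u - β / 2))
      + Real.tan (ω * (u - β / 2)) * Real.log (Real.cos (ω * (u - β / 2))) - ω * (u - β / 2)))
  let g : ℝ → ℝ := fun u => (1 - J u / 2) * Real.exp (J u)
  have hg : ∀ u ∈ Set.Icc 0 β, HasDerivAt F (g u) u := by
    intro u hu
    have hp := hcos u hu
    refine ((onshell_aux_deriv ω (β / 2) A u hω.ne' hp).const_mul (c ^ 2)).congr_deriv ?_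
    have he : Real.exp (J u) = c ^ 2 / Real.cos (ω * (u - β / 2)) ^ 2 := by
      simp only [J]
      rw [Real.exp_sub, mul_comm 2, mul_comm 2, Real.exp_mul, Real.exp_mul, ← hcdef,
        Real.exp_log hc, Real.exp_log hp]
      norm_num
    simp only [g]
    rw [he]
    simp only [J]
    ring
  have hgc : ContinuousOn g (Set.Icc 0 β) := by
    have hJ : ContinuousOn J (Set.Icc 0 β) := by
      refine continuousOn_const.sub (continuousOn_const.mul (ContinuousOn.log ?_ ?_))
      · fun_prop
      · exact fun u hu => (hcos u hu).ne'
    exact (continuousOn_const.sub (hJ.div_const 2)).mul hJ.rexp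
  have hin : ∀ τ ∈ Set.uIcc 0 β, (∫ τ' in (0 : ℝ)..τ,
        (1 - J (τ - τ') / 2) * Real.exp (J (τ - τ'))) = F τ - F 0 := by
    intro τ hτ
    rw [Set.uIcc_of_le hβ.le] at hτ
    have h1 := intervalIntegral.integral_comp_sub_left (a := 0) (b := τ) g τ
    rw [sub_self, sub_zero] at h1
    refine h1.trans ?_
    have hsub : Set.uIcc 0 τ ⊆ Set.Icc 0 β := by
      rw [Set.uIcc_of_le hτ.1]; exact Set.Icc_subset_Icc_right hτ.2
    exact intervalIntegral.integral_eq_sub_of_hasDerivAt (fun u hu => hg u (hsub hu))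
      ((hgc.mono hsub).intervalIntegrable)
  rw [intervalIntegral.integral_congr hin]
  have hFc : ContinuousOn F (Set.uIcc 0 β) := by
    rw [Set.uIcc_of_le hβ.le]
    exact fun u hu => (hg u hu).continuousAt.continuousWithinAt
  rw [intervalIntegral.integral_sub hFc.intervalIntegrable intervalIntegrable_const]
  have hodd : ∀ u, F (β - u) = - F u := by
    intro u
    have : ω * (β - u - β / 2) = - (ω * (u - β / 2)) := by ring
    simp only [F]
    rw [this, Real.tan_neg, Real.cos_neg]
    ring
  have h0 : ∫ u in (0 : ℝ)..β, F u = 0 := by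
    have h1 := intervalIntegral.integral_comp_sub_left (a := 0) (b := β) F β
    simp only [hodd, sub_self, sub_zero, intervalIntegral.integral_neg] at h1
    linarith
  rw [h0, intervalIntegral.integral_const]
  have h3 : ω * (0 - β / 2) = - (x / 2) := by rw [← hωβ]; ring
  have hs : Real.sin x = 2 * Real.sin (x / 2) * c := by
    rw [hcdef, ← Real.sin_two_mul]; congr 1; ring
  simp only [F]
  rw [h3, Real.tan_neg, Real.cos_neg, ← hcdef, ← hA, Real.tan_eq_sin_div_cos, ← hcdef, hs]
  simp only [ω, smul_eq_mul]
  have := hc.ne'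
  have := hx0.ne'
  have := hβ.ne'
  field_simp
  ring
end

section
/- Let x ∈ (0, π) and n ∈ ℝ, and set k = n/(2x). Define on (0, π): f₊(θ) = cot θ·sin(k(π/2 − θ)) + k·cos(k(π/2 − θ)) and f₋(θ) = cot θ·cos(k(π/2 − θ)) − k·sin(k(π/2 − θ)). Then both f₊ and f₋ satisfy the h = 2 eigenvalue equation −f″(θ) + (2/sin²θ)·f(θ) = k²·f(θ) for all θ ∈ (0, π). -/
theorem aux_eig (k : ℝ) (g p f : ℝ → ℝ) (hg : ∀ t, HasDerivAt g (p t) t)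
    (hp : ∀ t, HasDerivAt p (-k ^ 2 * g t) t)
    (hf : ∀ t, f t = Real.cos t / Real.sin t * g t - p t)
    (θ : ℝ) (hθ : θ ∈ Set.Ioo (0 : ℝ) Real.pi) :
    -(deriv (deriv f) θ) + 2 / (Real.sin θ) ^ 2 * f θ = k ^ 2 * f θ := by
  have hs : ∀ t ∈ Set.Ioo (0 : ℝ) Real.pi, Real.sin t ≠ 0 := fun t ht =>
    (Real.sin_pos_of_mem_Ioo ht).ne'
  have hc : ∀ t ∈ Set.Ioo (0 : ℝ) Real.pi,
      HasDerivAt (fun t => Real.cos t / Real.sin t) (-(1 / Real.sin t ^ 2)) t := by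
    intro t ht
    have h0 := hs t ht
    refine ((Real.hasDerivAt_cos t).fun_div (Real.hasDerivAt_sin t) h0).congr_deriv ?_
    field_simp
    linarith [Real.sin_sq_add_cos_sq t]
  have hfe : f = fun t => Real.cos t / Real.sin t * g t - p t := funext hf
  have h1 : ∀ t ∈ Set.Ioo (0 : ℝ) Real.pi, deriv f t =
      -(1 / Real.sin t ^ 2) * g t + Real.cos t / Real.sin t * p t - (-k ^ 2 * g t) := by
    intro t ht
    rw [hfe]
    exact (((hc t ht).fun_mul (hg t)).fun_sub (hp t)).deriv
  have h2 : deriv f =ᶠ[nhds θ] fun t =>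
      -(1 / Real.sin t ^ 2) * g t + Real.cos t / Real.sin t * p t - (-k ^ 2 * g t) := by
    filter_upwards [isOpen_Ioo.mem_nhds hθ] with t ht using h1 t ht
  have h0 := hs θ hθ
  have h3 : HasDerivAt (fun t => -(1 / Real.sin t ^ 2))
      (2 * Real.cos θ / Real.sin θ ^ 3) θ := by
    refine (((hasDerivAt_const θ (1 : ℝ)).fun_div ((Real.hasDerivAt_sin θ).fun_pow 2)
      (pow_ne_zero 2 h0)).fun_neg).congr_deriv ?_
    field_simp
    norm_num
    ring
  rw [h2.deriv_eq, (((h3.fun_mul (hg θ)).fun_add ((hc θ hθ).fun_mul (hp θ))).fun_sub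
    ((hg θ).const_mul (-k ^ 2))).deriv, hf]
  field_simp
  ring

/-- The h = 2 fluctuation eigenfunctions of the coarse-grained d-commuting SYK action:
f₊(θ) = cot θ·sin(k(π/2−θ)) + k·cos(k(π/2−θ)) and
f₋(θ) = cot θ·cos(k(π/2−θ)) − k·sin(k(π/2−θ)), with k = n/(2x), both satisfy
−f″ + (2/sin²θ)f = k²f on (0, π). -/
theorem h_eq_two_eigenfunctions
    (x n : ℝ) (hx : x ∈ Set.Ioo 0 Real.pi) :
    let k := n / (2 * x)
    let fp : ℝ → ℝ := fun θ =>
      Real.cos θ / Real.sin θ * Real.sin (k * (Real.pi / 2 - θ)) +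
        k * Real.cos (k * (Real.pi / 2 - θ))
    let fm : ℝ → ℝ := fun θ =>
      Real.cos θ / Real.sin θ * Real.cos (k * (Real.pi / 2 - θ)) -
        k * Real.sin (k * (Real.pi / 2 - θ))
    ∀ θ ∈ Set.Ioo (0 : ℝ) Real.pi,
      (-(deriv (deriv fp) θ) + 2 / (Real.sin θ) ^ 2 * fp θ = k ^ 2 * fp θ) ∧
        (-(deriv (deriv fm) θ) + 2 / (Real.sin θ) ^ 2 * fm θ = k ^ 2 * fm θ) := by
  intro k fp fm θ hθ
  have hu : ∀ t : ℝ, HasDerivAt (fun t => k * (Real.pi / 2 - t)) (-k) t := fun t =>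
    (((hasDerivAt_id t).const_sub (Real.pi / 2)).const_mul k).congr_deriv (by ring)
  have hS : ∀ t : ℝ, HasDerivAt (fun t => Real.sin (k * (Real.pi / 2 - t)))
      (-k * Real.cos (k * (Real.pi / 2 - t))) t := fun t =>
    (hu t).sin.congr_deriv (by ring)
  have hC : ∀ t : ℝ, HasDerivAt (fun t => Real.cos (k * (Real.pi / 2 - t)))
      (k * Real.sin (k * (Real.pi / 2 - t))) t := fun t =>
    (hu t).cos.congr_deriv (by ring)
  constructor
  · exact aux_eig k _ _ fp hS (fun t => ((hC t).const_mul (-k)).congr_deriv (by ring))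
      (fun t => by simp only [fp]; ring) θ hθ
  · exact aux_eig k _ _ fm hC (fun t => ((hS t).const_mul k).congr_deriv (by ring))
      (fun t => by simp only [fm]) θ hθ
end

section
/- Define g(y) = log(1 + ((π − y)/2)·cot(y/2)) − 2·log(sin(y/2)) − (π − y)·cot(y/2) for y ∈ (0, π). Then, as y → 0⁺, g(y) = −2π/y + 2 + log(4π) − 3·log y + (π/6)·y + O(y²); precisely, there exist constants C > 0 and δ ∈ (0, π) such that |g(y) − (−2π/y + 2 + log(4π) − 3·log y + (π/6)·y)| ≤ C·y² for all y ∈ (0, δ). -/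
lemma aux_log (u : ℝ) (h : |u| ≤ 1 / 2) : |Real.log (1 + u)| ≤ 2 * |u| := by
  have h1 := abs_le.1 h
  have hp : 0 < 1 + u := by linarith
  have h2 := Real.log_le_sub_one_of_pos hp
  have h3 := Real.one_sub_inv_le_log_of_pos hp
  have h4 : 1 - (1 + u)⁻¹ = u / (1 + u) := by field_simp; ring
  have h5 : -(2 * |u|) ≤ u / (1 + u) := by
    rw [le_div_iff₀ hp]
    rcases abs_cases u with ⟨e, _⟩ | ⟨e, _⟩ <;> rw [e] <;> nlinarith
  have h6 := le_abs_self u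
  have h7 := abs_nonneg u
  rw [abs_le]
  constructor <;> linarith

lemma aux_cot (t : ℝ) (h0 : 0 < t) (h1 : t < 1 / 4) :
    t / 2 ≤ Real.sin t ∧ |Real.sin t - t| ≤ t ^ 3 / 4 ∧
      |Real.cos t / Real.sin t - (1 / t - t / 3)| ≤ t ^ 3 / 4 := by
  have ht : |t| = t := abs_of_pos h0
  have hs := abs_le.1 (Real.sin_bound (x := t) (by rw [ht]; linarith))
  have hc := abs_le.1 (Real.cos_bound (x := t) (by rw [ht]; linarith))
  rw [ht] at hs hc
  obtain ⟨hs1, hs2⟩ := hs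
  obtain ⟨hc1, hc2⟩ := hc
  set s := Real.sin t
  set c := Real.cos t
  have ht2 : t ^ 2 ≤ 1 / 16 := by nlinarith
  have ht3 : t ^ 3 ≤ t / 16 := by nlinarith
  have p3 : 0 < t ^ 3 := by positivity
  have p5 : 0 < t ^ 5 := by positivity
  have ht5 : t ^ 5 ≤ t ^ 3 / 16 := by nlinarith
  have hs0 : t / 2 ≤ s := by linarith
  have hsp : 0 < s := by linarith
  refine ⟨hs0, ?_, ?_⟩
  · rw [abs_le]; constructor <;> linarith
  · have e : c / s - (1 / t - t / 3) =
        (t * (c - (1 - t ^ 2 / 2)) - (s - (t - t ^ 3 / 6)) * (1 - t ^ 2 / 3) - t ^ 5 / 18)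
          / (s * t) := by
      field_simp; ring
    have b1 : |t * (c - (1 - t ^ 2 / 2))| ≤ t ^ 5 * (5 / 96) := by
      rw [abs_mul, ht]
      have : |c - (1 - t ^ 2 / 2)| ≤ t ^ 4 * (5 / 96) := abs_le.2 ⟨hc1, hc2⟩
      calc _ ≤ t * (t ^ 4 * (5 / 96)) := by gcongr
        _ = _ := by ring
    have b2 : |(s - (t - t ^ 3 / 6)) * (1 - t ^ 2 / 3)| ≤ t ^ 5 / 100 * 1 := by
      rw [abs_mul]
      have : |s - (t - t ^ 3 / 6)| ≤ t ^ 5 / 100 := abs_le.2 ⟨hs1, hs2⟩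
      have : |1 - t ^ 2 / 3| ≤ 1 := by rw [abs_le]; constructor <;> nlinarith
      gcongr
    have hst : 0 < s * t := by positivity
    rw [e, abs_div, abs_of_pos hst, div_le_iff₀ hst]
    have b3 : t ^ 5 / 8 ≤ t ^ 3 / 4 * (s * t) := by
      have := mul_le_mul_of_nonneg_left hs0 (show 0 ≤ t ^ 4 / 4 by positivity)
      nlinarith
    refine le_trans ?_ b3
    rw [abs_le] at b1 b2 ⊢
    constructor <;> linarith [b1.1, b1.2, b2.1, b2.2]

/-- Small-y expansion of the Sommerfeld–Watson resummed h = 2 one-loop exponent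
g(y) = log(1 + ((π−y)/2)cot(y/2)) − 2log sin(y/2) − (π−y)cot(y/2):
g(y) = −2π/y + 2 + log(4π) − 3log y + (π/6)y + O(y²) as y → 0⁺. -/
theorem one_loop_exponent_expansion :
    let g : ℝ → ℝ := fun y =>
      Real.log (1 + ((Real.pi - y) / 2) * (Real.cos (y / 2) / Real.sin (y / 2))) -
        2 * Real.log (Real.sin (y / 2)) -
          (Real.pi - y) * (Real.cos (y / 2) / Real.sin (y / 2))
    ∃ C > 0, ∃ δ ∈ Set.Ioo (0 : ℝ) Real.pi, ∀ y ∈ Set.Ioo (0 : ℝ) δ,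
      |g y -
          (-2 * Real.pi / y + 2 + Real.log (4 * Real.pi) - 3 * Real.log y +
            (Real.pi / 6) * y)| ≤ C * y ^ 2 := by
  intro g
  have hpi := Real.pi_gt_three
  have hpi4 := Real.pi_le_four
  refine ⟨10, by norm_num, 1 / 2, ⟨by norm_num, by linarith⟩, ?_⟩
  rintro y ⟨hy0, hy1⟩
  obtain ⟨hs0, hs1, hr⟩ := aux_cot (y / 2) (by linarith) (by linarith)
  simp only [g]
  set s := Real.sin (y / 2)
  set q := Real.cos (y / 2) / s
  generalize hr' : q - (1 / (y / 2) - y / 2 / 3) = r at hr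
  have hq : q = 2 / y - y / 6 + r := by
    rw [← hr']; field_simp; ring
  have p2 : 0 < y ^ 2 := by positivity
  have p3 : 0 < y ^ 3 := by positivity
  have hy2 : y ^ 2 ≤ 1 / 4 := by nlinarith
  have hy3 : y ^ 3 ≤ y ^ 2 / 2 := by nlinarith
  have hw : |(Real.pi - y) * r| ≤ y ^ 3 / 8 := by
    rw [abs_mul, abs_of_pos (by linarith : 0 < Real.pi - y)]
    calc _ ≤ 4 * ((y / 2) ^ 3 / 4) := by gcongr; linarith
      _ = _ := by ring
  have hw1 := abs_le.1 hw
  -- sine factor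
  obtain ⟨v, hv⟩ : ∃ v, v = s / (y / 2) - 1 := ⟨_, rfl⟩
  have hsv : s = y / 2 * (1 + v) := by rw [hv]; field_simp; ring
  have hvb : |v| ≤ y ^ 2 := by
    have : v = (s - y / 2) / (y / 2) := by rw [hv]; field_simp
    rw [this, abs_div, abs_of_pos (by linarith : 0 < y / 2), div_le_iff₀ (by linarith)]
    nlinarith
  have hvl := aux_log v (by linarith)
  have hv1 := abs_le.1 hvb
  -- first log
  obtain ⟨u, hu⟩ : ∃ u, u = y / Real.pi *
    (-(Real.pi * y) / 12 + y ^ 2 / 12 + (Real.pi - y) * r / 2) := ⟨_, rfl⟩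
  have hA : 1 + (Real.pi - y) / 2 * q = Real.pi / y * (1 + u) := by
    rw [hq, hu]; field_simp; ring
  have hub : |u| ≤ y ^ 2 := by
    rw [hu, abs_mul, abs_of_pos (by positivity : 0 < y / Real.pi)]
    have k1 : |-(Real.pi * y) / 12 + y ^ 2 / 12 + (Real.pi - y) * r / 2| ≤ y := by
      rw [abs_le]; constructor <;> nlinarith [hw1.1, hw1.2]
    have k2 : y / Real.pi ≤ y := by
      apply div_le_self hy0.le; linarith
    calc _ ≤ y * y := by gcongr
      _ = _ := by ring
  have hul := aux_log u (by linarith)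
  have hu1 := abs_le.1 hub
  have l1 : Real.log (1 + (Real.pi - y) / 2 * q) =
      Real.log Real.pi - Real.log y + Real.log (1 + u) := by
    rw [hA, Real.log_mul (by positivity) (by linarith), Real.log_div (by positivity) hy0.ne']
  have l2 : Real.log s = Real.log y - Real.log 2 + Real.log (1 + v) := by
    rw [hsv, Real.log_mul (by positivity) (by linarith), Real.log_div hy0.ne' (by norm_num)]
  have l3 : Real.log (4 * Real.pi) = 2 * Real.log 2 + Real.log Real.pi := by
    rw [Real.log_mul (by norm_num) (by positivity), show (4 : ℝ) = 2 ^ 2 by norm_num,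
      Real.log_pow]
    norm_num
  have l4 : (Real.pi - y) * q = 2 * Real.pi / y - 2 - Real.pi / 6 * y + y ^ 2 / 6
      + (Real.pi - y) * r := by
    rw [hq]; field_simp; ring
  rw [l1, l2, l3, l4]
  have e : -2 * Real.pi / y = -(2 * Real.pi / y) := by ring
  rw [e]
  have a1 := abs_le.1 hul
  have a2 := abs_le.1 hvl
  rw [abs_le]
  constructor <;> linarith [a1.1, a1.2, a2.1, a2.2, hw1.1, hw1.2]
end
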